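/- Let H = (V, H) be a finite hypergraph with adjacency matrix A, let W ∈ ℝ^{N_R×N_R} be a matrix, and let f, g : ℝ → ℝ be differentiable at 0 with f(0) = 0 and g(0) = 0. Define τ : (ℝ^{N_R})^V → (ℝ^{N_R})^V vertex-wise by τ(x)(v) = f(W·∑_{h ∈ H with v ∈ h} g(∑_{w ∈ h, w ≠ v} x(w))) (the Model 1 transition with null input u = 0). Then τ is Fréchet differentiable at x = 0 and its derivative there is the linear map given by the matrix f′(0)·g′(0)·(A ⊗ W). -/

import Mathlib

open Finset Matrix Kronecker

/-- Double counting: summing over hyperedges through `v` equals multiplying by adjacency. -/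
theorem sum_edges_eq {V : Type*} [Fintype V] [DecidableEq V]
    (E : Finset (Finset V)) (A : Matrix V V ℝ)
    (hA : ∀ v w, A v w =
      if v = w then 0 else ((E.filter fun h => v ∈ h ∧ w ∈ h).card : ℝ))
    (v : V) (y : V → ℝ) :
    ∑ h ∈ E.filter (fun h => v ∈ h), ∑ w ∈ h.erase v, y w = ∑ w, A v w * y w := by
  have h1 : ∀ h : Finset V, ∑ w ∈ h.erase v, y w
      = ∑ w, if w ∈ h.erase v then y w else 0 := by
    intro h
    rw [← Finset.sum_filter]
    congr 1
    ext w
    simp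
  simp_rw [h1]
  rw [Finset.sum_comm]
  refine Finset.sum_congr rfl fun w _ => ?_
  rw [hA]
  by_cases hvw : v = w
  · subst hvw
    simp
  · have hwv : w ≠ v := fun h => hvw h.symm
    rw [if_neg hvw, ← Finset.sum_filter, Finset.sum_const, nsmul_eq_mul, Finset.filter_filter]
    simp [Finset.mem_erase, hwv]

/-- The Model 1 HypergraphESN transition with null input,
`τ(x)(v) = f(W·∑_{h ∋ v} g(∑_{w ∈ h, w ≠ v} x(w)))`, with `f`, `g` differentiable
at `0` and `f(0) = g(0) = 0`, is Fréchet differentiable at `x = 0` with derivative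
the linear map of the matrix `f′(0)·g′(0)·(A ⊗ W)`. -/
theorem stmt_13 {V : Type*} [Fintype V] [DecidableEq V]
    (E : Finset (Finset V)) (hE : ∀ h ∈ E, h.Nonempty)
    (A : Matrix V V ℝ)
    (hA : ∀ v w, A v w =
      if v = w then 0 else ((E.filter fun h => v ∈ h ∧ w ∈ h).card : ℝ))
    (NR : ℕ) (W : Matrix (Fin NR) (Fin NR) ℝ)
    (f g : ℝ → ℝ)
    (hf : DifferentiableAt ℝ f 0) (hg : DifferentiableAt ℝ g 0)
    (hf0 : f 0 = 0) (hg0 : g 0 = 0)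
    (τ : EuclideanSpace ℝ (V × Fin NR) → EuclideanSpace ℝ (V × Fin NR))
    (hτ : ∀ x : EuclideanSpace ℝ (V × Fin NR), ∀ (v : V) (k : Fin NR),
      τ x (v, k) = f (W.mulVec (fun j => ∑ h ∈ E.filter (fun h => v ∈ h),
        g (∑ w ∈ h.erase v, x (w, j))) k)) :
    HasFDerivAt τ
      (LinearMap.toContinuousLinearMap
        (Matrix.toEuclideanLin ((deriv f 0 * deriv g 0) • (A ⊗ₖ W)))) 0 := by
  rw [← hasFDerivWithinAt_univ, hasFDerivWithinAt_euclidean]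
  rintro ⟨v, k⟩
  rw [hasFDerivWithinAt_univ]
  have hp : ∀ (w : V) (j : Fin NR), HasFDerivAt
      (fun x : EuclideanSpace ℝ (V × Fin NR) => x (w, j))
      (PiLp.proj 2 (fun _ : V × Fin NR => ℝ) (w, j) : _ →L[ℝ] ℝ) 0 := fun w j =>
    (PiLp.proj 2 (fun _ : V × Fin NR => ℝ) (w, j) : _ →L[ℝ] ℝ).hasFDerivAt
  have hs : ∀ (h : Finset V) (j : Fin NR), HasFDerivAt
      (fun x : EuclideanSpace ℝ (V × Fin NR) => g (∑ w ∈ h.erase v, x (w, j)))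
      (deriv g 0 • ∑ w ∈ h.erase v,
        (PiLp.proj 2 (fun _ : V × Fin NR => ℝ) (w, j) : _ →L[ℝ] ℝ)) 0 := by
    intro h j
    have h1 := HasFDerivAt.fun_sum (u := h.erase v) (fun w _ => hp w j)
    refine HasDerivAt.comp_hasFDerivAt (h₂ := g) 0 ?_ h1
    simpa using hg.hasDerivAt
  have hm : HasFDerivAt
      (fun x : EuclideanSpace ℝ (V × Fin NR) => ∑ j, W k j *
        ∑ h ∈ E.filter (fun h => v ∈ h), g (∑ w ∈ h.erase v, x (w, j)))
      (∑ j, W k j • ∑ h ∈ E.filter (fun h => v ∈ h), (deriv g 0 • ∑ w ∈ h.erase v,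
        (PiLp.proj 2 (fun _ : V × Fin NR => ℝ) (w, j) : _ →L[ℝ] ℝ))) 0 :=
    HasFDerivAt.fun_sum fun j _ =>
      (HasFDerivAt.fun_sum fun h _ => hs h j).const_mul (W k j)
  have hF := HasDerivAt.comp_hasFDerivAt (h₂ := f) (h₂' := deriv f 0) 0
    (by simpa [hg0] using hf.hasDerivAt) hm
  have hfun : (fun x => τ x (v, k)) = f ∘ (fun x : EuclideanSpace ℝ (V × Fin NR) =>
      ∑ j, W k j * ∑ h ∈ E.filter (fun h => v ∈ h), g (∑ w ∈ h.erase v, x (w, j))) := by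
    funext x
    rw [hτ]
    rfl
  rw [hfun]
  refine hF.congr_fderiv ?_
  ext x
  have hL : ∀ j, ∑ h ∈ E.filter (fun h => v ∈ h), deriv g 0 * ∑ w ∈ h.erase v, x (w, j)
      = deriv g 0 * ∑ w, A v w * x (w, j) := by
    intro j
    rw [← Finset.mul_sum, sum_edges_eq E A hA v (fun w => x (w, j))]
  have hR : (Matrix.toEuclideanLin ((deriv f 0 * deriv g 0) • (A ⊗ₖ W)) x) (v, k)
      = ∑ p : V × Fin NR, (deriv f 0 * deriv g 0) * (A v p.1 * W k p.2) * x p := by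
    simp [Matrix.toLpLin_apply, Matrix.mulVec, dotProduct, Matrix.kroneckerMap_apply,
      Finset.mul_sum, mul_assoc]
  have hG : deriv f 0 * ∑ j, W k j * ∑ h ∈ E.filter (fun h => v ∈ h),
      deriv g 0 * ∑ w ∈ h.erase v, x (w, j)
      = (Matrix.toEuclideanLin ((deriv f 0 * deriv g 0) • (A ⊗ₖ W)) x) (v, k) := by
    rw [hR, Fintype.sum_prod_type, Finset.sum_comm, Finset.mul_sum]
    refine Finset.sum_congr rfl fun j _ => ?_
    rw [hL, Finset.mul_sum, Finset.mul_sum, Finset.mul_sum]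
    refine Finset.sum_congr rfl fun w _ => ?_
    ring
  simpa using hG
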